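/- Collapsing of the e/l-hierarchy: if a p/t-net S is e/l-persistent, then there exists k ∈ ℕ such that S is e/l-k-persistent. -/

import Mathlib

open Classical in
/-- The marking obtained by firing transition `a` in marking `M`:
tokens are removed from entries of `a` and added to exits of `a`. -/
noncomputable def fire {P T : Type} (Fpt : P → T → Prop) (Ftp : T → P → Prop)
    (M : P → ℕ) (a : T) : P → ℕ :=
  fun p => M p - (if Fpt p a then 1 else 0) + (if Ftp a p then 1 else 0)

/-- Transition `a` is enabled in marking `M` (all its entries are marked). -/
def Enabled {P T : Type} (Fpt : P → T → Prop) (M : P → ℕ) (a : T) : Prop :=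
  ∀ p, Fpt p a → 1 ≤ M p

/-- `Fires Fpt Ftp M w M'` means the string `w` is enabled in `M` and its
execution leads from `M` to `M'` (the predicate `M w M'`). -/
inductive Fires {P T : Type} (Fpt : P → T → Prop) (Ftp : T → P → Prop) :
    (P → ℕ) → List T → (P → ℕ) → Prop
  | nil (M : P → ℕ) : Fires Fpt Ftp M [] M
  | cons {M M'' : P → ℕ} {a : T} {w : List T} :
      Enabled Fpt M a → Fires Fpt Ftp (fire Fpt Ftp M a) w M'' →
      Fires Fpt Ftp M (a :: w) M''

/-- The string `w` is enabled in marking `M` (the predicate `M w`). -/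
def EnabledSeq {P T : Type} (Fpt : P → T → Prop) (Ftp : T → P → Prop)
    (M : P → ℕ) (w : List T) : Prop :=
  ∃ M', Fires Fpt Ftp M w M'

/-- `M` is reachable from the initial marking `M0`. -/
def Reachable {P T : Type} (Fpt : P → T → Prop) (Ftp : T → P → Prop)
    (M0 M : P → ℕ) : Prop :=
  ∃ w : List T, Fires Fpt Ftp M0 w M

/-- The step `M a` is e/l-k-persistent: the execution of `a` pushes the
execution of any other enabled action away for at most `k` steps. -/
def StepELkPersistent {P T : Type} (Fpt : P → T → Prop) (Ftp : T → P → Prop)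
    (M : P → ℕ) (a : T) (k : ℕ) : Prop :=
  ∀ b : T, b ≠ a → Enabled Fpt M b →
    ∃ w : List T, w.length ≤ k ∧ EnabledSeq Fpt Ftp M (a :: (w ++ [b]))

/-- The marking `M` is e/l-k-persistent: for every action `a` enabled in `M`,
the step `M a` is e/l-k-persistent. -/
def MarkingELkPersistent {P T : Type} (Fpt : P → T → Prop) (Ftp : T → P → Prop)
    (M : P → ℕ) (k : ℕ) : Prop :=
  ∀ a : T, Enabled Fpt M a → StepELkPersistent Fpt Ftp M a k

/-- The net is e/l-k-persistent: every reachable marking is e/l-k-persistent. -/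
def NetELkPersistent {P T : Type} (Fpt : P → T → Prop) (Ftp : T → P → Prop)
    (M0 : P → ℕ) (k : ℕ) : Prop :=
  ∀ M : P → ℕ, Reachable Fpt Ftp M0 M → MarkingELkPersistent Fpt Ftp M k

/-! Enlarging a marking, or replacing transitions by ones that consume less and produce more, keeps
a string enabled. As `P` is finite, triples `(M, a, b)` compared in this way are well-quasi-ordered,
by Dickson's lemma. If the shortest `w` with `M a w b` were unboundedly long over some set of
triples, those triples would therefore contain an increasing sequence along which the length still
tends to infinity; but a `w` that works for its first term works for all of them. -/

theorem exists_uniform_bound_of_wellQuasiOrderedLE {ι α β : Type*} [Preorder α]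
    [WellQuasiOrderedLE α] (key : ι → α) (size : β → ℕ) {Q : ι → β → Prop}
    (hQ : ∀ ⦃x y⦄, key x ≤ key y → ∀ w, Q x w → Q y w) {S : Set ι} (hS : ∀ x ∈ S, ∃ w, Q x w) :
    ∃ k, ∀ x ∈ S, ∃ w, size w ≤ k ∧ Q x w := by
  by_contra! hunbounded
  choose x hxS hlong using hunbounded
  obtain ⟨g, hg⟩ := wellQuasiOrdered_le.exists_monotone_subseq (key ∘ x)
  obtain ⟨w, hw⟩ := hS _ (hxS (g 0))
  have hle : size w ≤ g (size w) := g.strictMono.le_apply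
  exact hlong _ w hle (hQ (hg 0 _ (Nat.zero_le _)) w hw)

section Monotonicity

variable {P T : Type} {Fpt : P → T → Prop} {Ftp : T → P → Prop} {M N : P → ℕ} {a b : T}

/-- The pair (entries, exits) of a transition. Entries carry the dual order, so that
`arcs a ≤ arcs b` says that `b` consumes no more and produces no less than `a`. -/
def arcs (Fpt : P → T → Prop) (Ftp : T → P → Prop) (a : T) : (Set P)ᵒᵈ × Set P :=
  (OrderDual.toDual {p | Fpt p a}, {p | Ftp a p})

theorem Enabled.mono (ha : Enabled Fpt M a) (hMN : M ≤ N)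
    (hab : arcs Fpt Ftp a ≤ arcs Fpt Ftp b) : Enabled Fpt N b :=
  fun p hp => (ha p (hab.1 hp)).trans (hMN p)

theorem fire_mono (hMN : M ≤ N) (hab : arcs Fpt Ftp a ≤ arcs Fpt Ftp b) :
    fire Fpt Ftp M a ≤ fire Fpt Ftp N b := by
  intro p
  have hentry : Fpt p b → Fpt p a := fun h => hab.1 h
  have hexit : Ftp a p → Ftp b p := fun h => hab.2 h
  have hp : M p ≤ N p := hMN p
  unfold fire
  gcongr <;> split_ifs <;> simp_all

theorem EnabledSeq.mono {w w' : List T} (hw : EnabledSeq Fpt Ftp M w) (hMN : M ≤ N)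
    (hww' : List.Forall₂ (fun a b => arcs Fpt Ftp a ≤ arcs Fpt Ftp b) w w') :
    EnabledSeq Fpt Ftp N w' := by
  obtain ⟨M', hfires⟩ := hw
  induction hfires generalizing N w' with
  | nil =>
    cases hww'
    exact ⟨N, .nil N⟩
  | cons ha _ ih =>
    obtain - | ⟨hab, htail⟩ := hww'
    obtain ⟨N', hN'⟩ := ih (fire_mono hMN hab) htail
    exact ⟨N', .cons (ha.mono hMN hab) hN'⟩

theorem EnabledSeq.mono_endpoints {a' b' : T} {w : List T}
    (h : EnabledSeq Fpt Ftp M (a :: (w ++ [b]))) (hMN : M ≤ N)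
    (ha : arcs Fpt Ftp a ≤ arcs Fpt Ftp a') (hb : arcs Fpt Ftp b ≤ arcs Fpt Ftp b') :
    EnabledSeq Fpt Ftp N (a' :: (w ++ [b'])) :=
  have hw : List.Forall₂ (fun a b => arcs Fpt Ftp a ≤ arcs Fpt Ftp b) w w :=
    List.forall₂_same.2 fun _ _ => le_rfl
  h.mono hMN (.cons ha (List.rel_append hw (.cons hb .nil)))

end Monotonicity

theorem exists_uniform_length_bound {P T : Type} [Finite P] (Fpt : P → T → Prop)
    (Ftp : T → P → Prop) {S : Set ((P → ℕ) × T × T)}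
    (hS : ∀ x ∈ S, ∃ v : List T, EnabledSeq Fpt Ftp x.1 (x.2.1 :: (v ++ [x.2.2]))) :
    ∃ k : ℕ, ∀ x ∈ S, ∃ w : List T,
      w.length ≤ k ∧ EnabledSeq Fpt Ftp x.1 (x.2.1 :: (w ++ [x.2.2])) :=
  have : WellQuasiOrderedLE ((Set P)ᵒᵈ × Set P) := Finite.to_wellQuasiOrderedLE
  exists_uniform_bound_of_wellQuasiOrderedLE
    (fun x : (P → ℕ) × T × T => (x.1, arcs Fpt Ftp x.2.1, arcs Fpt Ftp x.2.2)) List.length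
    (fun _ _ hxy _ hw => hw.mono_endpoints hxy.1 hxy.2.1 hxy.2.2) hS

theorem el_persistent_imp_elk_persistent_general {P T : Type} [Finite P]
    (Fpt : P → T → Prop) (Ftp : T → P → Prop) (M0 : P → ℕ)
    (hel : ∀ M : P → ℕ, Reachable Fpt Ftp M0 M → ∀ a b : T, a ≠ b →
      Enabled Fpt M a → Enabled Fpt M b →
      ∃ v : List T, EnabledSeq Fpt Ftp M (a :: (v ++ [b]))) :
    ∃ k : ℕ, NetELkPersistent Fpt Ftp M0 k := by
  obtain ⟨k, hk⟩ := exists_uniform_length_bound Fpt Ftp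
    (S := {x | Reachable Fpt Ftp M0 x.1 ∧ x.2.1 ≠ x.2.2 ∧
      Enabled Fpt x.1 x.2.1 ∧ Enabled Fpt x.1 x.2.2})
    fun ⟨M, a, b⟩ ⟨hM, hab, ha, hb⟩ => hel M hM a b hab ha hb
  exact ⟨k, fun M hM a ha b hba hb => hk (M, a, b) ⟨hM, hba.symm, ha, hb⟩⟩

/-- **Collapsing of the e/l-hierarchy**: if a p/t-net is e/l-persistent, then
it is e/l-k-persistent for some `k ∈ ℕ`. -/
theorem el_persistent_imp_elk_persistent {P T : Type} [Fintype P] [Fintype T]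
    (Fpt : P → T → Prop) (Ftp : T → P → Prop) (M0 : P → ℕ)
    (hel : ∀ M : P → ℕ, Reachable Fpt Ftp M0 M → ∀ a b : T, a ≠ b →
      Enabled Fpt M a → Enabled Fpt M b →
      ∃ v : List T, EnabledSeq Fpt Ftp M (a :: (v ++ [b]))) :
    ∃ k : ℕ, NetELkPersistent Fpt Ftp M0 k :=
  el_persistent_imp_elk_persistent_general Fpt Ftp M0 hel
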